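/- Let w ∈ ℝ with w ≠ 0. Then lim_{r→0⁺} b(r) · (2 i sinh(πr))^{−i w} · G_{b(r)}(i b(r) w) · e^{−π Q(r) b(r) w} = (1/2π) Γ(i w) e^{−π w/2}, where Q(r) = b(r) + b(r)^{−1} and the complex power (2 i sinh(πr))^{−iw} is principal. (Note that 2 sin(π b(r)²) = 2 i sinh(πr); this is the scalar form of the statement that the coaction kernel of the quantum plane corepresentation, G_b(ibx−ibz) e^{πQb(z−x)} (2 sin πb²)^{iz−ix}, converges after rescaling to the kernel (1/2π)Γ(ix−iz) of the classical ax+b representation R₊.) -/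

import Mathlib

open Complex Filter Topology

/-- ζ̄_b = exp(−πi/4 − (πi/12)(b² + b^{−2})). -/
noncomputable def zetaBar (b : ℂ) : ℂ :=
  Complex.exp (-(Real.pi * Complex.I) / 4 - (Real.pi * Complex.I) / 12 * (b ^ 2 + b⁻¹ ^ 2))

/-- The quantum dilogarithm `G_b(x)`, defined for `Im(b²) > 0` by the infinite product
`ζ̄_b · ∏_{n=1}^∞ (1 − e^{2πi b⁻¹(x − n b⁻¹)}) / ∏_{n=0}^∞ (1 − e^{2πi b(x + n b)})`. -/
noncomputable def Gb (b x : ℂ) : ℂ :=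
  zetaBar b *
      (∏' n : ℕ, (1 - Complex.exp (2 * Real.pi * Complex.I * b⁻¹ * (x - (n + 1) * b⁻¹)))) /
    (∏' n : ℕ, (1 - Complex.exp (2 * Real.pi * Complex.I * b * (x + n * b))))

/-- `b(r) = e^{iπ/4} √r`, so that `b(r)² = i r`. -/
noncomputable def br (r : ℝ) : ℂ :=
  Complex.exp (Real.pi * Complex.I / 4) * (Real.sqrt r : ℂ)

/-!
Put `q = exp (-2πr)` and let `q̃ = exp (-2π/r)` be the dual nome. The modular inversion of the
Dedekind `η`-function absorbs `ζ̄_b`: for `x = i b w` the numerator of `G_b(x)` divided by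
`(q̃; q̃)_∞` tends to `1`, and what is left is Jackson's `Γ_q(iw)` times powers of `1 - q`, which
`(2 i sinh πr)^{-iw}` cancels up to the factor `r / (1 - q) → 1 / 2π`. It remains to see that
`Γ_q(x) → Γ(x)` as `q → 1⁻`. Both functions have an Euler product built in the same way, from
`log (1 - q ^ s)` and from `log s`; the second derivative of `log (1 - q ^ s)` is at most
`1 / (Re s)²` for every `q`, so for `Re x ≥ 0` the logarithms of the factors of `Γ_q(x + 1)` are
summable uniformly in `q` and the limit may be taken factor by factor. The functional equation
extends it to all `x` off the poles.
-/

section EulerProduct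

theorem norm_smul_sub_sub_sub_le_of_hasDerivAt {𝕜 E : Type*} [RCLike 𝕜] [NormedAddCommGroup E]
    [NormedSpace 𝕜 E] {f f' f'' : 𝕜 → E} {S : Set 𝕜} {C : ℝ} {a x : 𝕜} (hS : Convex ℝ S)
    (hf : ∀ s ∈ S, HasDerivAt f (f' s) s) (hf' : ∀ s ∈ S, HasDerivAt f' (f'' s) s)
    (hC : ∀ s ∈ S, ‖f'' s‖ ≤ C) (ha : a ∈ S) (ha1 : a + 1 ∈ S) (hax : a + x ∈ S) :
    ‖x • (f (a + 1) - f a) - (f (a + x) - f a)‖ ≤ C * (‖x‖ * ‖x - 1‖) := by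
  have hC0 : 0 ≤ C := (norm_nonneg _).trans (hC a ha)
  have hmem : ∀ t ∈ segment ℝ (0 : 𝕜) 1, a + t ∈ S ∧ a + t * x ∈ S ∧ ‖t‖ ≤ 1 := by
    rintro t ht
    obtain ⟨θ, hθ, rfl⟩ := segment_eq_image' ℝ (0 : 𝕜) 1 ▸ ht
    refine ⟨by simpa using hS.add_smul_mem ha ha1 hθ,
      by simpa using hS.add_smul_mem ha hax hθ, ?_⟩
    simpa [norm_smul, abs_of_nonneg hθ.1] using hθ.2
  -- The quantity is the increment over `[0, 1]` of `t ↦ x • f (a + t) - f (a + t * x)`.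
  have hderiv : ∀ t ∈ segment ℝ (0 : 𝕜) 1, HasDerivWithinAt
      (fun t => x • f (a + t) - f (a + t * x)) (x • (f' (a + t) - f' (a + t * x)))
      (segment ℝ 0 1) t := fun t ht => by
    have h1 : HasDerivAt (fun t => f (a + t)) (f' (a + t)) t :=
      (hf _ (hmem t ht).1).comp_const_add a t
    have h2 : HasDerivAt (fun t => f (a + t * x)) (x • f' (a + t * x)) t := by
      simpa [Function.comp_def] using
        (hf _ (hmem t ht).2.1).scomp t (((hasDerivAt_id t).mul_const x).const_add a)
    exact ((h1.const_smul x).sub h2).hasDerivWithinAt.congr_deriv (smul_sub _ _ _).symm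
  have hbound : ∀ t ∈ segment ℝ (0 : 𝕜) 1,
      ‖x • (f' (a + t) - f' (a + t * x))‖ ≤ C * (‖x‖ * ‖x - 1‖) := fun t ht => by
    obtain ⟨ht1, htx, htn⟩ := hmem t ht
    have hlip : ‖f' (a + t) - f' (a + t * x)‖ ≤ C * (‖t‖ * ‖x - 1‖) := by
      refine (hS.norm_image_sub_le_of_norm_hasDerivWithin_le
        (fun s hs => (hf' s hs).hasDerivWithinAt) hC htx ht1).trans_eq ?_
      rw [add_sub_add_left_eq_sub, ← mul_one_sub, norm_mul, norm_sub_rev 1 x]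
    calc ‖x • (f' (a + t) - f' (a + t * x))‖ ≤ ‖x‖ * (C * (1 * ‖x - 1‖)) := by
          rw [norm_smul]; gcongr; exact hlip.trans (by gcongr)
      _ = C * (‖x‖ * ‖x - 1‖) := by ring
  have h := (convex_segment (0 : 𝕜) 1).norm_image_sub_le_of_norm_hasDerivWithin_le hderiv hbound
    (left_mem_segment ℝ 0 1) (right_mem_segment ℝ 0 1)
  calc ‖x • (f (a + 1) - f a) - (f (a + x) - f a)‖
      = ‖x • f (a + 1) - f (a + 1 * x) - (x • f (a + 0) - f (a + 0 * x))‖ := by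
        rw [one_mul, zero_mul, add_zero, smul_sub]; congr 1; abel
    _ ≤ C * (‖x‖ * ‖x - 1‖) := by simpa using h

/-- The logarithm of the `k`-th factor
`(e^{ℓ(k+2)} / e^{ℓ(k+1)})^x · e^{ℓ(k+1)} / e^{ℓ(k+1+x)}` of an Euler product in which `e^ℓ` plays
the role of the identity function. For `ℓ = log` it is Euler's product for `Γ(x + 1)`; for
`ℓ(s) = log (1 - q ^ s)` it is the corresponding product for `Γ_q(x + 1)`. -/
noncomputable def eulerLogFactor (ℓ : ℂ → ℂ) (x : ℂ) (k : ℕ) : ℂ :=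
  x * (ℓ (k + 1 + 1) - ℓ (k + 1)) - (ℓ (k + 1 + x) - ℓ (k + 1))

theorem exp_sum_eulerLogFactor (ℓ : ℂ → ℂ) (x : ℂ) (N : ℕ) :
    exp (∑ k ∈ Finset.range N, eulerLogFactor ℓ x k) =
      exp (x * (ℓ (N + 1) - ℓ 1)) * ((∏ k ∈ Finset.range N, exp (ℓ (k + 1))) /
        ∏ k ∈ Finset.range N, exp (ℓ (k + 1 + x))) := by
  have htel := Finset.sum_range_sub (fun k : ℕ => ℓ (k + 1)) N
  push_cast [zero_add] at htel
  simp only [eulerLogFactor, Finset.sum_sub_distrib, ← Finset.mul_sum] at htel ⊢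
  rw [htel, exp_sub, exp_sub, exp_sum, exp_sum, div_div_eq_mul_div, mul_div_assoc]

theorem norm_eulerLogFactor_le {ℓ ℓ' ℓ'' : ℂ → ℂ} {x : ℂ} (hx : 0 ≤ x.re)
    (hℓ : ∀ s : ℂ, 0 < s.re → HasDerivAt ℓ (ℓ' s) s)
    (hℓ' : ∀ s : ℂ, 0 < s.re → HasDerivAt ℓ' (ℓ'' s) s)
    (hbound : ∀ s : ℂ, 0 < s.re → ‖ℓ'' s‖ ≤ 1 / s.re ^ 2) (k : ℕ) :
    ‖eulerLogFactor ℓ x k‖ ≤ 1 / ((k : ℝ) + 1) ^ 2 * (‖x‖ * ‖x - 1‖) := by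
  have hpos : ∀ s ∈ {s : ℂ | (k + 1 : ℝ) ≤ s.re}, 0 < s.re := fun s hs =>
    (Nat.cast_add_one_pos k).trans_le hs
  exact norm_smul_sub_sub_sub_le_of_hasDerivAt (convex_halfSpace_re_ge (k + 1 : ℝ))
    (fun s hs => hℓ s (hpos s hs)) (fun s hs => hℓ' s (hpos s hs))
    (fun s hs => (hbound s (hpos s hs)).trans (by gcongr; exact hs))
    (by simp) (by simp) (by simpa using hx)

theorem summable_one_div_add_one_sq_mul (C : ℝ) :
    Summable fun k : ℕ => 1 / ((k : ℝ) + 1) ^ 2 * C := by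
  have := (summable_nat_add_iff 1).2 (Real.summable_one_div_nat_pow.2 one_lt_two)
  exact_mod_cast this.mul_right C

theorem exp_sum_eulerLogFactor_log {x : ℂ} (hx : ∀ k : ℕ, (k : ℂ) + 1 + x ≠ 0) {N : ℕ}
    (hN : N ≠ 0) :
    exp (∑ k ∈ Finset.range N, eulerLogFactor log x k) =
      GammaSeq (x + 1) N * exp (x * (Real.log (N + 1) - Real.log N : ℝ)) / (N / (N + (1 + x))) := by
  have hN0 : (N : ℂ) ≠ 0 := Nat.cast_ne_zero.2 hN
  have hfact : ∏ k ∈ Finset.range N, exp (log (k + 1)) = N.factorial := by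
    rw [← Finset.prod_range_add_one_eq_factorial, Nat.cast_prod]
    exact Finset.prod_congr rfl fun k _ => by
      rw [exp_log (Nat.cast_add_one_ne_zero k), Nat.cast_add_one]
  have hprod : ∏ k ∈ Finset.range N, exp (log (k + 1 + x)) = ∏ k ∈ Finset.range N, (x + 1 + k) :=
    Finset.prod_congr rfl fun k _ => by rw [exp_log (hx k)]; ring
  have hpow : (N : ℂ) ^ (x + 1) * exp (x * (Real.log (N + 1) - Real.log N : ℝ)) =
      N * exp (x * log (N + 1)) := by
    have hlog : (Real.log (N + 1) : ℂ) = log (N + 1) := by exact_mod_cast natCast_log (n := N + 1)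
    rw [cpow_add _ _ hN0, cpow_one, cpow_def_of_ne_zero hN0, mul_right_comm, ← exp_add, ofReal_sub,
      hlog, natCast_log]
    ring_nf
  have hlast : x + 1 + N ≠ 0 := by convert hx N using 1; ring
  rw [exp_sum_eulerLogFactor, hfact, hprod, log_one, sub_zero, GammaSeq, Finset.prod_range_succ,
    div_mul_eq_mul_div, mul_right_comm, hpow, show (N : ℂ) + (1 + x) = x + 1 + N by ring]
  field_simp

theorem tendsto_exp_sum_eulerLogFactor_log {x : ℂ} (hx : 0 ≤ x.re) :
    Tendsto (fun N : ℕ => exp (∑ k ∈ Finset.range N, eulerLogFactor log x k)) atTop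
      (𝓝 (Gamma (x + 1))) := by
  have hne (k : ℕ) : (k : ℂ) + 1 + x ≠ 0 := fun h => by
    have := congrArg re h
    simp only [add_re, natCast_re, one_re, zero_re] at this
    linarith [(Nat.cast_nonneg k : (0 : ℝ) ≤ k)]
  have hlog : Tendsto (fun N : ℕ => exp (x * (Real.log (N + 1) - Real.log N : ℝ))) atTop
      (𝓝 1) := by
    have := (continuous_ofReal.tendsto 0).comp Real.tendsto_log_nat_add_one_sub_log
    simpa using (this.const_mul x).cexp
  have hlim := ((GammaSeq_tendsto_Gamma (x + 1)).mul hlog).div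
    (tendsto_natCast_div_add_atTop (1 + x)) one_ne_zero
  rw [mul_one, div_one] at hlim
  refine hlim.congr' ?_
  filter_upwards [eventually_ne_atTop 0] with N hN using (exp_sum_eulerLogFactor_log hne hN).symm

end EulerProduct

section QPochhammer

/-- The infinite `q`-Pochhammer symbol `(a; q)_∞ = ∏_{n ≥ 0} (1 - a qⁿ)`. -/
noncomputable def qPochhammer (a q : ℂ) : ℂ := ∏' n : ℕ, (1 - a * q ^ n)

theorem summable_norm_neg_mul_pow (a : ℂ) {q : ℂ} (hq : ‖q‖ < 1) :
    Summable fun n : ℕ => ‖-(a * q ^ n)‖ := by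
  simpa only [norm_neg, norm_mul, norm_pow] using
    (summable_geometric_of_lt_one (norm_nonneg q) hq).mul_left ‖a‖

theorem multipliable_one_sub_mul_pow (a : ℂ) {q : ℂ} (hq : ‖q‖ < 1) :
    Multipliable fun n : ℕ => 1 - a * q ^ n := by
  simpa only [sub_eq_add_neg] using
    multipliable_one_add_of_summable (summable_norm_neg_mul_pow a hq)

theorem qPochhammer_ne_zero {a q : ℂ} (hq : ‖q‖ < 1) (ha : ∀ n : ℕ, a * q ^ n ≠ 1) :
    qPochhammer a q ≠ 0 := by
  simpa only [qPochhammer, sub_eq_add_neg] using tprod_one_add_ne_zero_of_summable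
    (fun n => by simpa only [← sub_eq_add_neg] using sub_ne_zero.2 (ha n).symm)
    (summable_norm_neg_mul_pow a hq)

theorem qPochhammer_ne_zero_of_norm_lt_one {a q : ℂ} (ha : ‖a‖ < 1) (hq : ‖q‖ < 1) :
    qPochhammer a q ≠ 0 :=
  qPochhammer_ne_zero hq fun n h => by
    have hlt : ‖a * q ^ n‖ < 1 := by
      rw [norm_mul, norm_pow]
      exact mul_lt_one_of_nonneg_of_lt_one_left (norm_nonneg a) ha
        (pow_le_one₀ (norm_nonneg q) hq.le)
    rw [h, norm_one] at hlt
    exact hlt.false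

theorem qPochhammer_eq_one_sub_mul (a : ℂ) {q : ℂ} (hq : ‖q‖ < 1) :
    qPochhammer a q = (1 - a) * qPochhammer (a * q) q := by
  have hshift (n : ℕ) : 1 - a * q ^ (n + 1) = 1 - a * q * q ^ n := by ring
  simp only [qPochhammer]
  rw [tprod_eq_zero_mul' (by simpa only [hshift] using multipliable_one_sub_mul_pow (a * q) hq),
    pow_zero, mul_one]
  simp only [hshift]

theorem tendsto_qPochhammer_mul_self (a : ℂ) :
    Tendsto (fun q => qPochhammer (a * q) q) (𝓝 0) (𝓝 1) := by
  have hdom : ∀ᶠ q : ℂ in 𝓝 0, ∀ n : ℕ, ‖-(a * q ^ (n + 1))‖ ≤ ‖a‖ * (1 / 2 : ℝ) ^ (n + 1) := by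
    filter_upwards [Metric.ball_mem_nhds (0 : ℂ) one_half_pos] with q hq n
    rw [norm_neg, norm_mul, norm_pow]
    gcongr
    exact (mem_ball_zero_iff.1 hq).le
  have hlim := tendsto_tprod_one_add_of_dominated_convergence (g := 0)
    (((summable_nat_add_iff 1).2 summable_geometric_two).mul_left ‖a‖)
    (fun n => by simpa using (((continuous_pow (M := ℂ) (n + 1)).tendsto 0).const_mul a).neg) hdom
  simpa only [qPochhammer, mul_assoc, ← pow_succ', sub_eq_add_neg, Pi.zero_apply, add_zero,
    tprod_one] using hlim

end QPochhammer

section QGamma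

/-- Jackson's `q`-Gamma function `Γ_q(x) = (1 - q)^{1 - x} (q; q)_∞ / (q^x; q)_∞`, for
`0 < q < 1`. -/
noncomputable def qGamma (q : ℝ) (x : ℂ) : ℂ :=
  (1 - q : ℂ) ^ (1 - x) * (qPochhammer q q / qPochhammer ((q : ℂ) ^ x) q)

/-- The logarithm of the numerator of the `q`-number `[s]_q = (1 - q ^ s) / (1 - q)`. -/
noncomputable def logOneSubCPow (q : ℝ) (s : ℂ) : ℂ := log (1 - (q : ℂ) ^ s)

theorem sq_re_mul_norm_exp_le (z : ℂ) : z.re ^ 2 * ‖exp z‖ ≤ ‖1 - exp z‖ ^ 2 := by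
  have hsinh : (z.re / 2) ^ 2 ≤ Real.sinh (z.re / 2) ^ 2 := by
    rw [sq_le_sq, Real.abs_sinh]
    exact Real.self_le_sinh_iff.2 (abs_nonneg _)
  have hexp : Real.exp z.re = Real.exp (z.re / 2) ^ 2 := by
    rw [← Real.exp_nat_mul, Nat.cast_ofNat, mul_div_cancel₀ _ two_ne_zero]
  calc z.re ^ 2 * ‖exp z‖ = 4 * (z.re / 2) ^ 2 * Real.exp z.re := by rw [norm_exp]; ring
    _ ≤ 4 * Real.sinh (z.re / 2) ^ 2 * Real.exp z.re := by gcongr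
    _ = (1 - Real.exp z.re) ^ 2 := by
      rw [Real.sinh_eq, hexp, Real.exp_neg]
      field_simp
      ring
    _ = |‖(1 : ℂ)‖ - ‖exp z‖| ^ 2 := by rw [norm_one, norm_exp, sq_abs]
    _ ≤ ‖1 - exp z‖ ^ 2 := by gcongr; exact abs_norm_sub_norm_le _ _

variable {q : ℝ} {s x : ℂ}

theorem norm_ofReal_lt_one (hq : q ∈ Set.Ioo (0 : ℝ) 1) : ‖(q : ℂ)‖ < 1 := by
  rw [norm_real, Real.norm_of_nonneg hq.1.le]
  exact hq.2

theorem norm_ofReal_cpow_lt_one (hq : q ∈ Set.Ioo (0 : ℝ) 1) (hs : 0 < s.re) :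
    ‖(q : ℂ) ^ s‖ < 1 := by
  rw [norm_cpow_eq_rpow_re_of_pos hq.1]
  exact Real.rpow_lt_one hq.1.le hq.2 hs

theorem one_sub_ofReal_cpow_mem_slitPlane (hq : q ∈ Set.Ioo (0 : ℝ) 1) (hs : 0 < s.re) :
    1 - (q : ℂ) ^ s ∈ slitPlane := by
  rw [sub_eq_add_neg]
  exact mem_slitPlane_of_norm_lt_one (by rw [norm_neg]; exact norm_ofReal_cpow_lt_one hq hs)

theorem exp_logOneSubCPow (hq : q ∈ Set.Ioo (0 : ℝ) 1) (hs : 0 < s.re) :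
    exp (logOneSubCPow q s) = 1 - (q : ℂ) ^ s :=
  exp_log (slitPlane_ne_zero (one_sub_ofReal_cpow_mem_slitPlane hq hs))

theorem hasDerivAt_ofReal_cpow (hq : 0 < q) (s : ℂ) :
    HasDerivAt (fun s : ℂ => (q : ℂ) ^ s) ((q : ℂ) ^ s * log q) s := by
  simpa using (hasDerivAt_id s).const_cpow (.inl (ofReal_ne_zero.2 hq.ne'))

theorem hasDerivAt_logOneSubCPow (hq : q ∈ Set.Ioo (0 : ℝ) 1) (hs : 0 < s.re) :
    HasDerivAt (logOneSubCPow q) (-((q : ℂ) ^ s * log q) / (1 - (q : ℂ) ^ s)) s :=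
  ((hasDerivAt_ofReal_cpow hq.1 s).const_sub 1).clog (one_sub_ofReal_cpow_mem_slitPlane hq hs)

theorem hasDerivAt_deriv_logOneSubCPow (hq : q ∈ Set.Ioo (0 : ℝ) 1) (hs : 0 < s.re) :
    HasDerivAt (fun s : ℂ => -((q : ℂ) ^ s * log q) / (1 - (q : ℂ) ^ s))
      (-(log q ^ 2 * (q : ℂ) ^ s / (1 - (q : ℂ) ^ s) ^ 2)) s := by
  have hpow := hasDerivAt_ofReal_cpow hq.1 s
  have hne := slitPlane_ne_zero (one_sub_ofReal_cpow_mem_slitPlane hq hs)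
  refine ((hpow.mul_const (log q)).fun_neg.div (hpow.const_sub 1) hne).congr_deriv ?_
  ring

theorem norm_deriv_deriv_logOneSubCPow_le (hq : q ∈ Set.Ioo (0 : ℝ) 1) (hs : 0 < s.re) :
    ‖-(log q ^ 2 * (q : ℂ) ^ s / (1 - (q : ℂ) ^ s) ^ 2)‖ ≤ 1 / s.re ^ 2 := by
  have hne := slitPlane_ne_zero (one_sub_ofReal_cpow_mem_slitPlane hq hs)
  have hle := sq_re_mul_norm_exp_le (log q * s)
  rw [← cpow_def_of_ne_zero (ofReal_ne_zero.2 hq.1.ne'), ← ofReal_log hq.1.le, re_ofReal_mul,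
    mul_pow] at hle
  rw [norm_neg, norm_div, norm_mul, norm_pow, norm_pow, ← ofReal_log hq.1.le, norm_real,
    Real.norm_eq_abs, sq_abs, div_le_div_iff₀ (by positivity) (by positivity), one_mul]
  linarith

theorem norm_eulerLogFactor_logOneSubCPow_le (hq : q ∈ Set.Ioo (0 : ℝ) 1) (hx : 0 ≤ x.re)
    (k : ℕ) :
    ‖eulerLogFactor (logOneSubCPow q) x k‖ ≤ 1 / ((k : ℝ) + 1) ^ 2 * (‖x‖ * ‖x - 1‖) :=
  norm_eulerLogFactor_le hx (fun _ => hasDerivAt_logOneSubCPow hq)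
    (fun _ => hasDerivAt_deriv_logOneSubCPow hq) (fun _ => norm_deriv_deriv_logOneSubCPow_le hq) k

theorem tendsto_logOneSubCPow_natCast_add_one (hq : q ∈ Set.Ioo (0 : ℝ) 1) :
    Tendsto (fun N : ℕ => logOneSubCPow q (N + 1)) atTop (𝓝 0) := by
  have hpow : Tendsto (fun N : ℕ => (q : ℂ) ^ (N + 1)) atTop (𝓝 0) :=
    (tendsto_pow_atTop_nhds_zero_of_norm_lt_one (norm_ofReal_lt_one hq)).comp
      (tendsto_add_atTop_nat 1)
  have hlog := (hpow.const_sub 1).clog (by simp)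
  rw [sub_zero, log_one] at hlog
  exact hlog.congr fun N => by rw [logOneSubCPow]; norm_cast

theorem exp_tsum_eulerLogFactor_logOneSubCPow (hq : q ∈ Set.Ioo (0 : ℝ) 1) (hx : 0 ≤ x.re) :
    exp (∑' k, eulerLogFactor (logOneSubCPow q) x k) = qGamma q (x + 1) := by
  have hre (k : ℕ) : 0 < ((k : ℂ) + 1).re := by simpa using Nat.cast_add_one_pos k
  have hq0 : (q : ℂ) ≠ 0 := ofReal_ne_zero.2 hq.1.ne'
  have hx1 : 0 < (x + 1).re := by simpa using add_pos_of_nonneg_of_pos hx one_pos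
  have hsum : Summable (eulerLogFactor (logOneSubCPow q) x) :=
    .of_norm_bounded (summable_one_div_add_one_sq_mul _)
      (norm_eulerLogFactor_logOneSubCPow_le hq hx)
  have hnum (k : ℕ) : exp (logOneSubCPow q (k + 1)) = 1 - (q : ℂ) * (q : ℂ) ^ k := by
    rw [exp_logOneSubCPow hq (hre k), cpow_add _ _ hq0, cpow_natCast, cpow_one, mul_comm]
  have hden (k : ℕ) : exp (logOneSubCPow q (k + 1 + x)) = 1 - (q : ℂ) ^ (x + 1) * (q : ℂ) ^ k := by
    rw [exp_logOneSubCPow hq (by simpa using add_pos_of_pos_of_nonneg (hre k) hx), add_assoc,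
      cpow_add _ _ hq0, cpow_natCast, mul_comm, add_comm 1 x]
  have hone : exp (-(x * logOneSubCPow q 1)) = (1 - q : ℂ) ^ (1 - (x + 1)) := by
    have hne := slitPlane_ne_zero (one_sub_ofReal_cpow_mem_slitPlane (s := 1) hq (by simp))
    rw [cpow_one] at hne
    rw [logOneSubCPow, cpow_one, cpow_def_of_ne_zero hne]
    ring_nf
  have hqn := norm_ofReal_lt_one hq
  have hprod (a : ℂ) := (multipliable_one_sub_mul_pow a hqn).tendsto_prod_tprod_nat
  have hlim := ((((tendsto_logOneSubCPow_natCast_add_one hq).sub_const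
    (logOneSubCPow q 1)).const_mul x).cexp).mul ((hprod q).div (hprod ((q : ℂ) ^ (x + 1)))
    (qPochhammer_ne_zero_of_norm_lt_one (norm_ofReal_cpow_lt_one hq hx1) hqn))
  rw [zero_sub, mul_neg, hone] at hlim
  refine tendsto_nhds_unique hsum.hasSum.tendsto_sum_nat.cexp (hlim.congr fun N => ?_)
  simp only [exp_sum_eulerLogFactor, hnum, hden, Pi.div_apply]

theorem tendsto_one_sub_cpow_div_one_sub (s : ℂ) :
    Tendsto (fun q : ℝ => (1 - (q : ℂ) ^ s) / (1 - q)) (𝓝[<] 1) (𝓝 s) := by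
  have hderiv : HasDerivAt (fun q : ℝ => (q : ℂ) ^ s) s 1 := by
    simpa using ((hasDerivAt_id (1 : ℂ)).cpow_const (c := s) one_mem_slitPlane).comp_ofReal
  refine (hasDerivAt_iff_tendsto_slope_left_right.1 hderiv).1.congr fun q => ?_
  rw [slope_def_module, real_smul, ofReal_one, one_cpow, ← neg_sub 1 q, ← neg_sub 1 ((q : ℂ) ^ s)]
  push_cast
  rw [inv_neg, neg_mul_neg, div_eq_inv_mul]

theorem tendsto_logOneSubCPow_sub_log (hs : 0 < s.re) :
    Tendsto (fun q => logOneSubCPow q s - Real.log (1 - q)) (𝓝[<] 1) (𝓝 (log s)) := by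
  refine ((tendsto_one_sub_cpow_div_one_sub s).clog (.inl hs)).congr' ?_
  filter_upwards [Ioo_mem_nhdsLT zero_lt_one] with q hq
  have hlog := log_ofReal_mul (inv_pos.2 (sub_pos.2 hq.2))
    (slitPlane_ne_zero (one_sub_ofReal_cpow_mem_slitPlane hq hs))
  push_cast [Real.log_inv] at hlog
  rw [div_eq_inv_mul, hlog, logOneSubCPow]
  ring

theorem tendsto_eulerLogFactor_logOneSubCPow (hx : 0 ≤ x.re) (k : ℕ) :
    Tendsto (fun q => eulerLogFactor (logOneSubCPow q) x k) (𝓝[<] 1)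
      (𝓝 (eulerLogFactor log x k)) := by
  have hre : 0 < ((k : ℂ) + 1).re := by simpa using Nat.cast_add_one_pos k
  have h1 := tendsto_logOneSubCPow_sub_log hre
  have h2 := tendsto_logOneSubCPow_sub_log (s := k + 1 + 1) (add_pos hre one_pos)
  have hx1 := tendsto_logOneSubCPow_sub_log (s := k + 1 + x) (add_pos_of_pos_of_nonneg hre hx)
  refine (((h2.sub h1).const_mul x).sub (hx1.sub h1)).congr fun q => ?_
  rw [eulerLogFactor]
  ring

theorem tendsto_qGamma_add_one_of_re_nonneg (hx : 0 ≤ x.re) :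
    Tendsto (fun q => qGamma q (x + 1)) (𝓝[<] 1) (𝓝 (Gamma (x + 1))) := by
  have hdom : ∀ᶠ q : ℝ in 𝓝[<] 1, ∀ k,
      ‖eulerLogFactor (logOneSubCPow q) x k‖ ≤ 1 / ((k : ℝ) + 1) ^ 2 * (‖x‖ * ‖x - 1‖) := by
    filter_upwards [Ioo_mem_nhdsLT zero_lt_one] with q hq k
      using norm_eulerLogFactor_logOneSubCPow_le hq hx k
  have hsummable := summable_one_div_add_one_sq_mul (‖x‖ * ‖x - 1‖)
  have hsum : Summable (eulerLogFactor log x) := .of_norm_bounded hsummable fun k =>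
    le_of_tendsto (tendsto_eulerLogFactor_logOneSubCPow hx k).norm (hdom.mono fun q hq => hq k)
  rw [← tendsto_nhds_unique hsum.hasSum.tendsto_sum_nat.cexp
    (tendsto_exp_sum_eulerLogFactor_log hx)]
  refine (tendsto_tsum_of_dominated_convergence hsummable
    (tendsto_eulerLogFactor_logOneSubCPow hx) hdom).cexp.congr' ?_
  filter_upwards [Ioo_mem_nhdsLT zero_lt_one] with q hq
    using exp_tsum_eulerLogFactor_logOneSubCPow hq hx

theorem qGamma_eq_div_mul_qGamma_add_one (hq : q ∈ Set.Ioo (0 : ℝ) 1) (x : ℂ) :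
    qGamma q x = (1 - q) / (1 - (q : ℂ) ^ x) * qGamma q (x + 1) := by
  have hq0 : (q : ℂ) ≠ 0 := ofReal_ne_zero.2 hq.1.ne'
  have hq1 : (1 - q : ℂ) ≠ 0 := sub_ne_zero.2 (by exact_mod_cast hq.2.ne')
  rw [qGamma, qGamma, qPochhammer_eq_one_sub_mul ((q : ℂ) ^ x) (norm_ofReal_lt_one hq),
    cpow_add _ _ hq0, cpow_one, show 1 - x = 1 - (x + 1) + 1 by ring, cpow_add _ _ hq1, cpow_one]
  simp only [div_eq_mul_inv, mul_inv]
  ring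

theorem tendsto_qGamma (hx : ∀ m : ℕ, x ≠ -m) :
    Tendsto (fun q => qGamma q x) (𝓝[<] 1) (𝓝 (Gamma x)) := by
  obtain ⟨n, hn⟩ := exists_nat_ge (1 - x.re)
  induction n generalizing x with
  | zero =>
    simpa using tendsto_qGamma_add_one_of_re_nonneg (x := x - 1) (by simpa using hn)
  | succ n ih =>
    have hx0 : x ≠ 0 := by simpa using hx 0
    have hstep := ih (x := x + 1)
      (fun m h => hx (m + 1) (by push_cast; linear_combination h))
      (by push_cast at hn; simp only [add_re, one_re]; linarith)
    have hlim := ((tendsto_one_sub_cpow_div_one_sub x).inv₀ hx0).mul hstep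
    rw [Gamma_add_one x hx0, inv_mul_cancel_left₀ hx0] at hlim
    refine hlim.congr' ?_
    filter_upwards [Ioo_mem_nhdsLT zero_lt_one] with q hq
    rw [inv_div, ← qGamma_eq_div_mul_qGamma_add_one hq]

end QGamma

section QuantumDilogarithm

open Function.Periodic (qParam norm_qParam_lt_one)
open scoped Real

theorem eta_eq_qParam_mul_qPochhammer (z : ℂ) :
    ModularForm.eta z = qParam 24 z * qPochhammer (qParam 1 z) (qParam 1 z) := by
  simp only [ModularForm.eta, ModularForm.eta_q, qPochhammer, pow_succ']

theorem sqrt_I_eq_exp : Complex.sqrt I = exp (π * I / 4) := by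
  rw [Complex.sqrt, cpow_def_of_ne_zero I_ne_zero, log_I]
  ring_nf

variable {b : ℂ}

theorem zetaBar_mul_qPochhammer_dual (hre : 0 < b.re) (him : 0 < b.im) :
    zetaBar b * qPochhammer (qParam 1 (-1 / b ^ 2)) (qParam 1 (-1 / b ^ 2)) =
      -I * b * qPochhammer (qParam 1 (b ^ 2)) (qParam 1 (b ^ 2)) := by
  have hsq : b ^ 2 ∈ UpperHalfPlane.upperHalfPlaneSet := by
    have : 0 < (b ^ 2).im := by rw [sq, mul_im]; positivity
    exact this
  have hη := ModularForm.eta_comp_eq_csqrt_I_inv hsq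
  simp only [Function.comp_apply, Pi.smul_apply, Pi.mul_apply, smul_eq_mul,
    sqrt_I_eq_exp, ← exp_neg, show (b ^ 2).sqrt = b from sq_cpow_two_inv hre,
    eta_eq_qParam_mul_qPochhammer] at hη
  have hζ : zetaBar b =
      exp (-(π * I / 4)) * exp (-(π * I * b ^ 2 / 12)) * qParam 24 (-1 / b ^ 2) := by
    rw [zetaBar, qParam, ← exp_add, ← exp_add, inv_pow]
    push_cast
    ring_nf
  have hI : exp (-(π * I / 4)) * exp (-(π * I / 4)) = -I := by
    rw [← exp_add, ← exp_neg_pi_div_two_mul_I]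
    ring_nf
  have hcancel : exp (-(π * I * b ^ 2 / 12)) * qParam 24 (b ^ 2) = 1 := by
    rw [qParam, ← exp_add, ← exp_zero]
    push_cast
    ring_nf
  set P := qPochhammer (qParam 1 (b ^ 2)) (qParam 1 (b ^ 2))
  rw [hζ]
  linear_combination exp (-(π * I / 4)) * exp (-(π * I * b ^ 2 / 12)) * hη +
    exp (-(π * I / 4)) * exp (-(π * I / 4)) * b * P * hcancel + b * P * hI

theorem Gb_eq_zetaBar_mul_qPochhammer_div (b x : ℂ) :
    Gb b x = zetaBar b *
      qPochhammer (qParam 1 (x / b) * qParam 1 (-1 / b ^ 2)) (qParam 1 (-1 / b ^ 2)) /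
      qPochhammer (qParam 1 (b * x)) (qParam 1 (b ^ 2)) := by
  have hnum (n : ℕ) : exp (2 * π * I * b⁻¹ * (x - (n + 1) * b⁻¹)) =
      qParam 1 (x / b) * qParam 1 (-1 / b ^ 2) * qParam 1 (-1 / b ^ 2) ^ n := by
    simp only [qParam, ← exp_nat_mul, ← exp_add, ofReal_one]
    ring_nf
  have hden (n : ℕ) : exp (2 * π * I * b * (x + n * b)) =
      qParam 1 (b * x) * qParam 1 (b ^ 2) ^ n := by
    simp only [qParam, ← exp_nat_mul, ← exp_add, ofReal_one]
    ring_nf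
  simp only [Gb, qPochhammer, hnum, hden]

theorem norm_qParam_neg_one_div_sq_lt_one (hre : 0 < b.re) (him : 0 < b.im) :
    ‖qParam 1 (-1 / b ^ 2)‖ < 1 := by
  refine norm_qParam_lt_one one_pos ?_
  have hb : b ≠ 0 := fun h => hre.ne' (by rw [h, zero_re])
  rw [neg_div, one_div, neg_im, inv_im, neg_div, neg_neg]
  refine div_pos ?_ (normSq_pos.2 (pow_ne_zero 2 hb))
  rw [sq, mul_im]
  positivity

theorem Gb_eq_qPochhammer_div_mul_div (hre : 0 < b.re) (him : 0 < b.im) (x : ℂ) :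
    Gb b x = -I * b *
      (qPochhammer (qParam 1 (b ^ 2)) (qParam 1 (b ^ 2)) /
        qPochhammer (qParam 1 (b * x)) (qParam 1 (b ^ 2))) *
      (qPochhammer (qParam 1 (x / b) * qParam 1 (-1 / b ^ 2)) (qParam 1 (-1 / b ^ 2)) /
        qPochhammer (qParam 1 (-1 / b ^ 2)) (qParam 1 (-1 / b ^ 2))) := by
  have hdual := norm_qParam_neg_one_div_sq_lt_one hre him
  have hne := qPochhammer_ne_zero_of_norm_lt_one hdual hdual
  rw [Gb_eq_zetaBar_mul_qPochhammer_div,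
    eq_div_of_mul_eq hne (zetaBar_mul_qPochhammer_dual hre him)]
  simp only [div_eq_mul_inv]
  ring

variable {r : ℝ}

theorem br_sq (hr : 0 ≤ r) : br r ^ 2 = I * r := by
  have hI : exp (π * I / 4) ^ 2 = I := by
    rw [← exp_nat_mul, ← mul_div_assoc, mul_left_comm, Nat.cast_ofNat]
    convert exp_pi_div_two_mul_I using 2
    ring
  rw [br, mul_pow, hI, ← ofReal_pow, Real.sq_sqrt hr]

theorem br_re_pos (hr : 0 < r) : 0 < (br r).re := by
  rw [br, re_mul_ofReal, mul_div_right_comm, ← ofReal_ofNat, ← ofReal_div, exp_ofReal_mul_I_re,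
    Real.cos_pi_div_four]
  positivity

theorem br_im_pos (hr : 0 < r) : 0 < (br r).im := by
  rw [br, im_mul_ofReal, mul_div_right_comm, ← ofReal_ofNat, ← ofReal_div, exp_ofReal_mul_I_im,
    Real.sin_pi_div_four]
  positivity

theorem br_ne_zero (hr : 0 < r) : br r ≠ 0 := fun h =>
  (br_re_pos hr).ne' (by rw [h, zero_re])

theorem qParam_br_sq (hr : 0 ≤ r) : qParam 1 (br r ^ 2) = Real.exp (-(2 * π * r)) := by
  rw [qParam, br_sq hr]
  push_cast
  congr 1
  linear_combination (2 * π * r : ℂ) * I_sq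

theorem qParam_br_mul_I_mul_br_mul (hr : 0 ≤ r) (w : ℂ) :
    qParam 1 (br r * (I * br r * w)) = (Real.exp (-(2 * π * r)) : ℂ) ^ (I * w) := by
  rw [cpow_def_of_ne_zero (ofReal_ne_zero.2 (Real.exp_ne_zero _)),
    ← ofReal_log (Real.exp_nonneg _), Real.log_exp, qParam, ofReal_one, div_one]
  push_cast
  congr 1
  linear_combination (2 * π * I * I * w : ℂ) * br_sq hr + 2 * π * I * w * r * I_sq

theorem qParam_I_mul_br_mul_div_br (hr : 0 < r) (w : ℂ) :
    qParam 1 (I * br r * w / br r) = exp (-(2 * π * w)) := by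
  rw [qParam, mul_right_comm I, mul_div_cancel_right₀ _ (br_ne_zero hr), ofReal_one, div_one]
  congr 1
  linear_combination (2 * π * w : ℂ) * I_sq

theorem qParam_neg_one_div_br_sq (hr : 0 ≤ r) :
    qParam 1 (-1 / br r ^ 2) = exp (-(2 * π / r)) := by
  rw [qParam, br_sq hr, neg_div, one_div, mul_inv, inv_I, ofReal_one, div_one]
  congr 1
  linear_combination (2 * π / r : ℂ) * I_sq

theorem one_sub_exp_neg_pos {t : ℝ} (ht : 0 < t) : 0 < 1 - Real.exp (-t) := by
  rwa [sub_pos, Real.exp_lt_one_iff, neg_lt_zero]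

theorem one_sub_ofReal_exp_neg_ne_zero {t : ℝ} (ht : 0 < t) : (1 - Real.exp (-t) : ℂ) ≠ 0 := by
  exact_mod_cast (one_sub_exp_neg_pos ht).ne'

theorem br_mul_Gb (hr : 0 < r) (w : ℂ) :
    br r * Gb (br r) (I * br r * w) =
      r * (1 - Real.exp (-(2 * π * r)) : ℂ) ^ (I * w - 1) *
        qGamma (Real.exp (-(2 * π * r))) (I * w) *
        (qPochhammer (exp (-(2 * π * w)) * exp (-(2 * π / r))) (exp (-(2 * π / r))) /
          qPochhammer (exp (-(2 * π / r))) (exp (-(2 * π / r)))) := by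
  have hbsq : br r * (-I * br r) = r := by
    linear_combination -I * br_sq hr.le - r * I_sq
  have hpow : (1 - Real.exp (-(2 * π * r)) : ℂ) ^ (I * w - 1) *
      (1 - Real.exp (-(2 * π * r)) : ℂ) ^ (1 - I * w) = 1 := by
    rw [← cpow_add _ _ (one_sub_ofReal_exp_neg_ne_zero (by positivity)), sub_add_sub_cancel,
      sub_self, cpow_zero]
  rw [Gb_eq_qPochhammer_div_mul_div (br_re_pos hr) (br_im_pos hr), qParam_br_sq hr.le,
    qParam_br_mul_I_mul_br_mul hr.le, qParam_I_mul_br_mul_div_br hr,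
    qParam_neg_one_div_br_sq hr.le, qGamma, ← mul_assoc, ← mul_assoc, hbsq,
    mul_assoc (r : ℂ) (_ ^ _), ← mul_assoc (_ ^ _) (_ ^ _), hpow, one_mul]

theorem two_mul_I_mul_sinh_cpow {t : ℝ} (ht : 0 < t) (s : ℂ) :
    (2 * I * sinh t) ^ s = (1 - Real.exp (-(2 * t)) : ℂ) ^ s * exp (s * (t + π / 2 * I)) := by
  have hq : 0 < 1 - Real.exp (-(2 * t)) := one_sub_exp_neg_pos (mul_pos two_pos ht)
  have hsinh : 2 * I * sinh t =
      (Real.exp t : ℝ) * ((1 - Real.exp (-(2 * t)) : ℝ) * I) := by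
    rw [sinh, ← mul_assoc, ← ofReal_mul, mul_one_sub, ← Real.exp_add,
      show t + -(2 * t) = -t by ring]
    push_cast
    ring
  have hne : ((1 - Real.exp (-(2 * t)) : ℝ) : ℂ) ≠ 0 := ofReal_ne_zero.2 hq.ne'
  have hnI := mul_ne_zero hne I_ne_zero
  have hexp : (Real.exp t : ℂ) ≠ 0 := ofReal_ne_zero.2 (Real.exp_ne_zero t)
  rw [hsinh, ← ofReal_one, ← ofReal_sub, cpow_def_of_ne_zero (mul_ne_zero hexp hnI),
    cpow_def_of_ne_zero hne, log_ofReal_mul (Real.exp_pos t) hnI, Real.log_exp,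
    log_ofReal_mul hq I_ne_zero, log_I, ofReal_log hq.le, ← exp_add]
  ring_nf

theorem rescaled_Gb_eq_qGamma_mul (hr : 0 < r) (w : ℂ) :
    br r * (2 * I * sinh (π * r)) ^ (-(I * w)) * Gb (br r) (I * br r * w) *
        exp (-(π * (br r + (br r)⁻¹) * br r * w)) =
      r / (1 - Real.exp (-(2 * π * r))) * qGamma (Real.exp (-(2 * π * r))) (I * w) *
        (qPochhammer (exp (-(2 * π * w)) * exp (-(2 * π / r))) (exp (-(2 * π / r))) /
          qPochhammer (exp (-(2 * π / r))) (exp (-(2 * π / r)))) *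
        exp (-(π * w) / 2 - 2 * π * I * w * r) := by
  have hne := one_sub_ofReal_exp_neg_ne_zero (t := 2 * π * r) (by positivity)
  have hsinh := two_mul_I_mul_sinh_cpow (t := π * r) (by positivity) (-(I * w))
  rw [ofReal_mul, ← mul_assoc 2 π r] at hsinh
  have hpow : (1 - Real.exp (-(2 * π * r)) : ℂ) ^ (-(I * w)) *
      (1 - Real.exp (-(2 * π * r)) : ℂ) ^ (I * w - 1) = (1 - Real.exp (-(2 * π * r)) : ℂ)⁻¹ := by
    rw [← cpow_add _ _ hne, ← cpow_neg_one]
    ring_nf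
  have hexp : exp (-(I * w) * ((π * r : ℂ) + π / 2 * I)) *
      exp (-(π * (br r + (br r)⁻¹) * br r * w)) = exp (-(π * w) / 2 - 2 * π * I * w * r) := by
    rw [← exp_add]
    congr 1
    linear_combination (-(π * w) / 2 : ℂ) * I_sq - π * w * br_sq hr.le -
      π * w * inv_mul_cancel₀ (br_ne_zero hr)
  rw [hsinh, ← hexp, div_eq_mul_inv (r : ℂ), ← hpow]
  linear_combination (1 - Real.exp (-(2 * π * r)) : ℂ) ^ (-(I * w)) *
    exp (-(I * w) * ((π * r : ℂ) + π / 2 * I)) *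
    exp (-(π * (br r + (br r)⁻¹) * br r * w)) * br_mul_Gb hr w

theorem tendsto_qPochhammer_dual_nome (a : ℂ) :
    Tendsto (fun r : ℝ => qPochhammer (a * exp (-(2 * π / r))) (exp (-(2 * π / r))))
      (𝓝[>] 0) (𝓝 1) := by
  have hreal : Tendsto (fun r : ℝ => Real.exp (-(2 * π * r⁻¹))) (𝓝[>] 0) (𝓝 0) :=
    Real.tendsto_exp_neg_atTop_nhds_zero.comp
      (tendsto_inv_nhdsGT_zero.const_mul_atTop Real.two_pi_pos)
  have hnome := (continuous_ofReal.tendsto 0).comp hreal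
  refine ((tendsto_qPochhammer_mul_self a).comp hnome).congr fun r => ?_
  simp only [Function.comp_apply, div_eq_mul_inv]
  push_cast
  rfl

theorem tendsto_exp_neg_two_pi_mul_nhdsLT_one :
    Tendsto (fun r : ℝ => Real.exp (-(2 * π * r))) (𝓝[>] 0) (𝓝[<] 1) := by
  refine tendsto_nhdsWithin_iff.2 ⟨?_, ?_⟩
  · have hcont : Continuous fun r : ℝ => Real.exp (-(2 * π * r)) := by fun_prop
    simpa using (hcont.tendsto 0).mono_left nhdsWithin_le_nhds
  · filter_upwards [self_mem_nhdsWithin] with r (hr : 0 < r)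
    exact sub_pos.1 (one_sub_exp_neg_pos (by positivity))

theorem tendsto_div_one_sub_exp_neg_two_pi_mul :
    Tendsto (fun r : ℝ => (r / (1 - Real.exp (-(2 * π * r))) : ℂ)) (𝓝[>] 0)
      (𝓝 (1 / (2 * π))) := by
  have hderiv : HasDerivAt (fun r : ℝ => 1 - Real.exp (-(2 * π * r))) (2 * π) 0 := by
    simpa using (((hasDerivAt_id (0 : ℝ)).const_mul (2 * π)).fun_neg.exp).const_sub 1
  have hlim := (continuous_ofReal.tendsto _).comp
    (hderiv.tendsto_slope_zero_right.inv₀ Real.two_pi_pos.ne')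
  simpa [Function.comp_def, div_eq_mul_inv, mul_comm] using hlim

end QuantumDilogarithm

theorem stmt10_general (w : ℂ) (hw : ∀ m : ℕ, I * w ≠ -m) :
    Tendsto
      (fun r : ℝ =>
        br r * (2 * I * sinh ((Real.pi : ℂ) * r)) ^ (-(I * w)) *
            Gb (br r) (I * br r * w) *
            exp (-((Real.pi : ℂ) * (br r + (br r)⁻¹) * br r * w)))
      (𝓝[>] (0 : ℝ))
      (𝓝 (1 / (2 * (Real.pi : ℂ)) * Gamma (I * w) *
          exp (-((Real.pi : ℂ) * w) / 2))) := by
  have hΓ := (tendsto_qGamma hw).comp tendsto_exp_neg_two_pi_mul_nhdsLT_one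
  have hdual := (tendsto_qPochhammer_dual_nome (exp (-(2 * Real.pi * w)))).div
    (tendsto_qPochhammer_dual_nome 1) one_ne_zero
  have hexp : Tendsto (fun r : ℝ => exp (-(Real.pi * w) / 2 - 2 * Real.pi * I * w * r))
      (𝓝[>] 0) (𝓝 (exp (-(Real.pi * w) / 2))) := by
    have hcont : Continuous fun r : ℝ => exp (-(Real.pi * w) / 2 - 2 * Real.pi * I * w * r) := by
      fun_prop
    simpa using (hcont.tendsto 0).mono_left nhdsWithin_le_nhds
  have hlim := ((tendsto_div_one_sub_exp_neg_two_pi_mul.mul hΓ).mul hdual).mul hexp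
  rw [div_one, mul_one] at hlim
  refine hlim.congr' ?_
  filter_upwards [self_mem_nhdsWithin] with r hr
  simp only [rescaled_Gb_eq_qGamma_mul hr, Function.comp_apply, Pi.div_apply, one_mul]

/-- Scalar form of the classical limit of the quantum-plane coaction kernel:
for real `w ≠ 0`,
`lim_{r→0⁺} b(r) (2i sinh(πr))^{−iw} G_{b(r)}(i b(r) w) e^{−π Q(r) b(r) w} = (1/2π) Γ(iw) e^{−πw/2}`,
where `Q(r) = b(r) + b(r)⁻¹` and the complex power is principal. -/
theorem stmt10 (w : ℝ) (hw : w ≠ 0) :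
    Tendsto
      (fun r : ℝ =>
        br r * (2 * Complex.I * Complex.sinh ((Real.pi : ℂ) * r)) ^ (-(Complex.I * w)) *
            Gb (br r) (Complex.I * br r * w) *
            Complex.exp (-((Real.pi : ℂ) * (br r + (br r)⁻¹) * br r * w)))
      (𝓝[>] (0 : ℝ))
      (𝓝 (1 / (2 * (Real.pi : ℂ)) * Complex.Gamma (Complex.I * w) *
          Complex.exp (-((Real.pi : ℂ) * w) / 2))) :=
  stmt10_general w fun m h => hw (by simpa using congrArg im h)
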